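/- Let k ≤ n and let X_{i_1,j_1}, …, X_{i_k,j_k} be pairwise distinct indecomposable representations of Q_ε. The sequence (X_{i_1,j_1}, …, X_{i_k,j_k}) is an exceptional sequence if and only if the set of chords d = {{i_1,j_1}, …, {i_k,j_k}} is a strand diagram (no two chords cross and the graph on {0,…,n} with edge set d is a forest) and, for all ℓ < p such that {i_ℓ,j_ℓ} and {i_p,j_p} share an endpoint, the chord {i_ℓ,j_ℓ} is clockwise from {i_p,j_p}. Equivalently, assigning the label k+1−ℓ to the chord {i_ℓ,j_ℓ} yields a good labeling of d, and this assignment gives a bijection between exceptional sequences of Q_ε of length k and strand diagrams with k strands equipped with a good labeling. -/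

import Mathlib

namespace ESPaper

/-- Source of arrow `a m` (between vertices `m` and `m+1`): `m` if `ε m = +` (true). -/
def asrc (ε : ℕ → Bool) (m : ℕ) : ℕ := if ε m then m else m + 1

/-- Target of arrow `a m`. -/
def atgt (ε : ℕ → Bool) (m : ℕ) : ℕ := if ε m then m + 1 else m

/-- A representation of the type `A_n` quiver `Q_ε`: finite dimensional vector spaces at the
vertices `1, …, n` (the spaces at the remaining indices are required to be trivial, so that
the maps attached to indices outside `1, …, n-1` carry no information) together with a
linear map along each arrow `a m : asrc ε m → atgt ε m`, `1 ≤ m ≤ n-1`. -/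
structure Rep (K : Type) [Field K] (n : ℕ) (ε : ℕ → Bool) : Type 1 where
  V : ℕ → Type
  [instAdd : ∀ m, AddCommGroup (V m)]
  [instMod : ∀ m, Module K (V m)]
  [instFin : ∀ m, FiniteDimensional K (V m)]
  triv : ∀ m, m = 0 ∨ n < m → Subsingleton (V m)
  φ : ∀ m, V (asrc ε m) →ₗ[K] V (atgt ε m)

attribute [instance] Rep.instAdd Rep.instMod Rep.instFin

/-- A morphism of representations of `Q_ε`. -/
structure RepHom {K : Type} [Field K] {n : ℕ} {ε : ℕ → Bool} (A B : Rep K n ε) where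
  app : ∀ m, A.V m →ₗ[K] B.V m
  comm : ∀ m, (app (atgt ε m)).comp (A.φ m) = (B.φ m).comp (app (asrc ε m))

/-- Vertex space of the indecomposable `X_{i,j}` (for `0 ≤ i < j ≤ n`): `K` at the
vertices `i+1, …, j` and `0` elsewhere. -/
def XV (K : Type) [Field K] (n i j m : ℕ) : Submodule K K :=
  if i + 1 ≤ m ∧ m ≤ j ∧ m ≤ n then ⊤ else ⊥

/-- Arrow map of the indecomposable `X_{i,j}`: the identity whenever both endpoints of the
arrow lie in the support, and zero otherwise. -/
def Xφ (K : Type) [Field K] (n : ℕ) (ε : ℕ → Bool) (i j m : ℕ) :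
    XV K n i j (asrc ε m) →ₗ[K] XV K n i j (atgt ε m) :=
  if h : i + 1 ≤ atgt ε m ∧ atgt ε m ≤ j ∧ atgt ε m ≤ n then
    LinearMap.codRestrict _ (XV K n i j (asrc ε m)).subtype
      (fun x => by simp [XV, h.1, h.2.1, h.2.2])
  else 0

/-- The indecomposable representation `X_{i,j}` of `Q_ε`. -/
def Xrep (K : Type) [Field K] (n : ℕ) (ε : ℕ → Bool) (i j : ℕ) : Rep K n ε where
  V m := XV K n i j m
  instAdd _ := inferInstance
  instMod _ := inferInstance
  instFin _ := inferInstance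
  triv m hm := by
    have hneg : ¬ (i + 1 ≤ m ∧ m ≤ j ∧ m ≤ n) := by omega
    have hbot : XV K n i j m = ⊥ := by unfold XV; rw [if_neg hneg]
    show Subsingleton (XV K n i j m)
    rw [hbot]
    infer_instance
  φ m := Xφ K n ε i j m

variable {K : Type} [Field K]

/-- `Hom(A, B) = 0`. -/
def homZero {n : ℕ} {ε : ℕ → Bool} (A B : Rep K n ε) : Prop :=
  ∀ θ : RepHom A B, ∀ m, θ.app m = 0

/-- `Hom(A, B) ≠ 0`. -/
def homNonzero {n : ℕ} {ε : ℕ → Bool} (A B : Rep K n ε) : Prop :=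
  ∃ θ : RepHom A B, ∃ m, θ.app m ≠ 0

/-- `0 → B → E → A → 0` is a short exact sequence. -/
def IsSES {n : ℕ} {ε : ℕ → Bool} {B E A : Rep K n ε}
    (f : RepHom B E) (g : RepHom E A) : Prop :=
  (∀ m, Function.Injective (f.app m)) ∧ (∀ m, Function.Surjective (g.app m)) ∧
    (∀ m, LinearMap.range (f.app m) = LinearMap.ker (g.app m))

/-- The short exact sequence `0 → B → E → A → 0` splits. -/
def Splits {n : ℕ} {ε : ℕ → Bool} {E A : Rep K n ε} (g : RepHom E A) : Prop :=
  ∃ s : RepHom A E, ∀ m, (g.app m).comp (s.app m) = LinearMap.id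

/-- `Ext¹(A, B) ≠ 0`: there is a nonsplit short exact sequence `0 → B → E → A → 0`. -/
def extNonzero {n : ℕ} {ε : ℕ → Bool} (A B : Rep K n ε) : Prop :=
  ∃ (E : Rep K n ε) (f : RepHom B E) (g : RepHom E A), IsSES f g ∧ ¬ Splits g

/-- `Ext¹(A, B) = 0`. -/
def extZero {n : ℕ} {ε : ℕ → Bool} (A B : Rep K n ε) : Prop := ¬ extNonzero A B

/-- `(U, V)` is an exceptional pair: `Hom(V,U) = 0` and `Ext¹(V,U) = 0`. -/
def ExcPair {n : ℕ} {ε : ℕ → Bool} (U V : Rep K n ε) : Prop := homZero V U ∧ extZero V U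


/-- The chords `c = {c.1, c.2}` and `d = {d.1, d.2}` (with `c.1 < c.2`, `d.1 < d.2`) cross. -/
def Crosses (ε : ℕ → Bool) (c d : ℕ × ℕ) : Prop :=
  (c.1 < d.1 ∧ d.1 < c.2 ∧ c.2 < d.2 ∧ ε d.1 = ε c.2) ∨
  (d.1 < c.1 ∧ c.1 < d.2 ∧ d.2 < c.2 ∧ ε c.1 = ε d.2) ∨
  (c.1 < d.1 ∧ d.1 < d.2 ∧ d.2 < c.2 ∧ ε d.1 ≠ ε d.2) ∨
  (d.1 < c.1 ∧ c.1 < c.2 ∧ c.2 < d.2 ∧ ε c.1 ≠ ε c.2)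

/-- The chords `c` and `d` share an endpoint. -/
def SharesEndpoint (c d : ℕ × ℕ) : Prop :=
  c.1 = d.1 ∨ c.1 = d.2 ∨ c.2 = d.1 ∨ c.2 = d.2

/-- The chord `c` is clockwise from the chord `d` (chords written with `c.1 < c.2`, `d.1 < d.2`). -/
def Cw (ε : ℕ → Bool) (c d : ℕ × ℕ) : Prop :=
  (c.2 = d.1 ∧ ε c.2 = true) ∨
  (d.2 = c.1 ∧ ε c.1 = false) ∨
  (c.1 = d.1 ∧ ((c.2 < d.2 ∧ ε c.2 = false) ∨ (d.2 < c.2 ∧ ε d.2 = true))) ∨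
  (c.2 = d.2 ∧ ((c.1 < d.1 ∧ ε d.1 = false) ∨ (d.1 < c.1 ∧ ε c.1 = true)))

/-- The graph on `{0,…,n} ⊆ ℕ` determined by a finite set of chords. -/
def chordGraph (d : Finset (ℕ × ℕ)) : SimpleGraph ℕ :=
  SimpleGraph.fromEdgeSet {e : Sym2 ℕ | ∃ c ∈ d, e = s(c.1, c.2)}

/-- The graph on `{0,…,n} ⊆ ℕ` determined by a family of chords. -/
def chordGraphF {k : ℕ} (c : Fin k → ℕ × ℕ) : SimpleGraph ℕ :=
  SimpleGraph.fromEdgeSet {e : Sym2 ℕ | ∃ a : Fin k, e = s((c a).1, (c a).2)}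

/-- `d` is a strand diagram on `S_{n,ε}`: valid pairwise-noncrossing chords forming a forest. -/
def IsDiagram (n : ℕ) (ε : ℕ → Bool) (d : Finset (ℕ × ℕ)) : Prop :=
  (∀ c ∈ d, c.1 < c.2 ∧ c.2 ≤ n) ∧
  (∀ c ∈ d, ∀ c' ∈ d, ¬ Crosses ε c c') ∧
  (chordGraph d).IsAcyclic

/-- The family `c` is a strand diagram (pairwise-noncrossing chords forming a forest). -/
def IsDiagramF {k : ℕ} (ε : ℕ → Bool) (c : Fin k → ℕ × ℕ) : Prop :=
  (∀ a b : Fin k, ¬ Crosses ε (c a) (c b)) ∧ (chordGraphF c).IsAcyclic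

/-- The partial order of the poset `P_d`: `x ≤ y` iff there is a chain of chords of `d`
from `x` to `y` in which each chord shares an endpoint with, and is clockwise from,
the previous one. -/
def leD (ε : ℕ → Bool) (d : Finset (ℕ × ℕ)) : ℕ × ℕ → ℕ × ℕ → Prop :=
  Relation.ReflTransGen (fun x y => x ∈ d ∧ y ∈ d ∧ SharesEndpoint x y ∧ Cw ε y x)

/-- The sequence `(X_{c 0}, …, X_{c (k-1)})` of indecomposables is an exceptional sequence. -/
def IsExcSeq (K : Type) [Field K] (n : ℕ) {k : ℕ} (ε : ℕ → Bool) (c : Fin k → ℕ × ℕ) : Prop :=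
  ∀ a b : Fin k, a < b →
    ExcPair (Xrep K n ε (c a).1 (c a).2) (Xrep K n ε (c b).1 (c b).2)

/-- The set of indecomposables `{X_e : e ∈ d}` is an exceptional collection, i.e. it can be
ordered into an exceptional sequence. -/
def IsExcColl (K : Type) [Field K] (n : ℕ) (ε : ℕ → Bool) (d : Finset (ℕ × ℕ)) : Prop :=
  ∃ c : Fin d.card → ℕ × ℕ, Function.Injective c ∧ (∀ a, c a ∈ d) ∧ IsExcSeq K n ε c

/-- support predicate -/
def SS (n i j m : ℕ) : Prop := i + 1 ≤ m ∧ m ≤ j ∧ m ≤ n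

lemma mem_XV {n i j m : ℕ} (h : SS n i j m) (x : K) : x ∈ XV K n i j m := by
  have h' : i + 1 ≤ m ∧ m ≤ j ∧ m ≤ n := h
  simp [XV, h'.1, h'.2.1, h'.2.2]

lemma XV_zero {n i j m : ℕ} (h : ¬ SS n i j m) (x : XV K n i j m) : x = 0 := by
  have h' : ¬ (i + 1 ≤ m ∧ m ≤ j ∧ m ≤ n) := h
  obtain ⟨x, hx⟩ := x
  rw [XV, if_neg h'] at hx
  simpa using hx

open Classical in
/-- multiplication by a scalar, as a map between vertex spaces -/
noncomputable def mkL (n i j m i' j' m' : ℕ) (t : K) : XV K n i j m →ₗ[K] XV K n i' j' m' :=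
  if h : SS n i' j' m' then
    LinearMap.codRestrict _ (t • (XV K n i j m).subtype) (fun _ => mem_XV h _)
  else 0

lemma mkL_pos {n i j m i' j' m' : ℕ} {t : K} (h : SS n i' j' m') (x : XV K n i j m) :
    ((mkL n i j m i' j' m' t x : XV K n i' j' m') : K) = t * (x : K) := by
  simp [mkL, h]

lemma Xφ_pos {n : ℕ} {ε : ℕ → Bool} {i j m : ℕ} (h : SS n i j (atgt ε m))
    (x : XV K n i j (asrc ε m)) : ((Xφ K n ε i j m x : XV K n i j (atgt ε m)) : K) = x := by
  have h' : i + 1 ≤ atgt ε m ∧ atgt ε m ≤ j ∧ atgt ε m ≤ n := h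
  rw [Xφ, dif_pos h']
  rfl

open Classical in
/-- the scalar of a map between vertex spaces -/
noncomputable def sc {n i j m i' j' m' : ℕ} (A : XV K n i j m →ₗ[K] XV K n i' j' m') : K :=
  if h : SS n i j m then (A ⟨1, mem_XV h 1⟩ : K) else 0

lemma sc_spec {n i j m i' j' m' : ℕ} (A : XV K n i j m →ₗ[K] XV K n i' j' m')
    (x : XV K n i j m) : (A x : K) = sc A * (x : K) := by
  by_cases h : SS n i j m
  · have : x = (x : K) • (⟨1, mem_XV h 1⟩ : XV K n i j m) := by
      ext; simp
    rw [this, map_smul, sc, dif_pos h]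
    simp [mul_comm]
  · rw [XV_zero h x]; simp

lemma sc_src {n i j m i' j' m' : ℕ} (A : XV K n i j m →ₗ[K] XV K n i' j' m')
    (h : ¬ SS n i j m) : sc A = 0 := by simp [sc, h]

lemma sc_tgt {n i j m i' j' m' : ℕ} (A : XV K n i j m →ₗ[K] XV K n i' j' m')
    (h : ¬ SS n i' j' m') : sc A = 0 := by
  unfold sc
  split_ifs with h1
  · rw [XV_zero h (A _)]; rfl
  · rfl

/-- the arrow `m` contributes to the Euler form of `(X_d, X_c)` -/
def Arr (n : ℕ) (ε : ℕ → Bool) (d c : ℕ × ℕ) (m : ℕ) : Prop :=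
  SS n d.1 d.2 (asrc ε m) ∧ SS n c.1 c.2 (atgt ε m)

/-- scalar families supported on both supports -/
def Supp (K : Type) [Field K] (n : ℕ) (d c : ℕ × ℕ) (t : ℕ → K) : Prop :=
  ∀ m, t m ≠ 0 → SS n d.1 d.2 m ∧ SS n c.1 c.2 m

lemma homZero_iff (n : ℕ) (ε : ℕ → Bool) (d c : ℕ × ℕ) :
    homZero (Xrep K n ε d.1 d.2) (Xrep K n ε c.1 c.2) ↔
      ∀ t : ℕ → K, Supp K n d c t → (∀ m, Arr n ε d c m → t (atgt ε m) = t (asrc ε m)) →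
        ∀ m, t m = 0 := by
  constructor
  · intro H t ht ha m
    by_contra hm
    obtain ⟨hd, hc⟩ := ht m hm
    let θ : RepHom (Xrep K n ε d.1 d.2) (Xrep K n ε c.1 c.2) :=
      { app := fun m => mkL n d.1 d.2 m c.1 c.2 m (t m)
        comm := by
          intro m
          refine LinearMap.ext fun x => ?_
          change XV K n d.1 d.2 (asrc ε m) at x
          change mkL n d.1 d.2 (atgt ε m) c.1 c.2 (atgt ε m) (t (atgt ε m)) (Xφ K n ε d.1 d.2 m x)
            = Xφ K n ε c.1 c.2 m (mkL n d.1 d.2 (asrc ε m) c.1 c.2 (asrc ε m) (t (asrc ε m)) x)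
          by_cases h2 : SS n c.1 c.2 (atgt ε m)
          · by_cases h1 : SS n d.1 d.2 (asrc ε m)
            · ext
              have e := ha m ⟨h1, h2⟩
              rw [mkL_pos h2, Xφ_pos h2]
              by_cases h3 : SS n d.1 d.2 (atgt ε m)
              · rw [Xφ_pos h3]
                by_cases h4 : SS n c.1 c.2 (asrc ε m)
                · rw [mkL_pos h4, e]
                · have : t (asrc ε m) = 0 := by
                    by_contra h; exact h4 (ht _ h).2
                  rw [XV_zero h4 (mkL _ _ _ _ _ _ _ _ _), e, this]; simp
              · have : t (atgt ε m) = 0 := by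
                  by_contra h; exact h3 (ht _ h).1
                by_cases h4 : SS n c.1 c.2 (asrc ε m)
                · rw [mkL_pos h4, ← e, this]; simp
                · rw [XV_zero h4 (mkL _ _ _ _ _ _ _ _ _), this]; simp
            · rw [XV_zero h1 x]; simp
          · rw [XV_zero h2 (mkL _ _ _ _ _ _ _ _ _), XV_zero h2 (Xφ _ _ _ _ _ _ _)] }
    have h0 : mkL n d.1 d.2 m c.1 c.2 m (t m) = 0 := H θ m
    have h1 := mkL_pos (t := t m) hc (⟨1, mem_XV hd 1⟩ : XV K n d.1 d.2 m)
    rw [h0] at h1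
    apply hm
    simpa using h1.symm
  · intro H θ m
    let A : ∀ m, XV K n d.1 d.2 m →ₗ[K] XV K n c.1 c.2 m := fun m => θ.app m
    have hA : ∀ m, ∀ x : XV K n d.1 d.2 (asrc ε m),
        A (atgt ε m) (Xφ K n ε d.1 d.2 m x) = Xφ K n ε c.1 c.2 m (A (asrc ε m) x) :=
      fun m x => LinearMap.congr_fun (θ.comm m) x
    have := H (fun m => sc (A m)) ?_ ?_ m
    · refine LinearMap.ext fun x => ?_
      change XV K n d.1 d.2 m at x
      change A m x = 0
      ext
      rw [sc_spec, this]; simp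
    · intro m hm
      constructor
      · by_contra h; exact hm (sc_src _ h)
      · by_contra h; exact hm (sc_tgt _ h)
    · intro m ⟨h1, h2⟩
      have e := congrArg (fun z : XV K n c.1 c.2 (atgt ε m) => (z : K)) (hA m ⟨1, mem_XV h1 1⟩)
      simp only [sc_spec (A (atgt ε m)), Xφ_pos h2, sc_spec (A (asrc ε m))] at e
      by_cases h3 : SS n d.1 d.2 (atgt ε m)
      · rw [Xφ_pos h3] at e
        simpa using e
      · rw [XV_zero h3 (Xφ _ _ _ _ _ _ _)] at e
        show sc (A _) = sc (A _)
        rw [sc_src (A (atgt ε m)) h3]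
        simpa using e

/-- the extension of `X_d` by `X_c` with cocycle `η` -/
noncomputable def extRep (n : ℕ) (ε : ℕ → Bool) (d c : ℕ × ℕ) (η : ℕ → K) : Rep K n ε where
  V m := XV K n c.1 c.2 m × XV K n d.1 d.2 m
  instAdd _ := inferInstance
  instMod _ := inferInstance
  instFin _ := inferInstance
  triv m hm := by
    refine ⟨fun a b => ?_⟩
    have h1 : ¬ SS n c.1 c.2 m := by unfold SS; omega
    have h2 : ¬ SS n d.1 d.2 m := by unfold SS; omega
    ext1
    · rw [XV_zero h1 a.1, XV_zero h1 b.1]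
    · rw [XV_zero h2 a.2, XV_zero h2 b.2]
  φ m := LinearMap.prod
    ((Xφ K n ε c.1 c.2 m).comp (LinearMap.fst K _ _) +
      (mkL n d.1 d.2 (asrc ε m) c.1 c.2 (atgt ε m) (η m)).comp (LinearMap.snd K _ _))
    ((Xφ K n ε d.1 d.2 m).comp (LinearMap.snd K _ _))

lemma extZero_iff (n : ℕ) (ε : ℕ → Bool) (d c : ℕ × ℕ) :
    extZero (Xrep K n ε d.1 d.2) (Xrep K n ε c.1 c.2) ↔
      ∀ η : ℕ → K, ∃ t : ℕ → K, Supp K n d c t ∧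
        ∀ m, Arr n ε d c m → t (atgt ε m) - t (asrc ε m) = η m := by
  constructor
  · intro H η
    let f : RepHom (Xrep K n ε c.1 c.2) (extRep n ε d c η) :=
      { app := fun m => LinearMap.inl K (XV K n c.1 c.2 m) (XV K n d.1 d.2 m)
        comm := by
          intro m
          refine LinearMap.ext fun x => ?_
          change XV K n c.1 c.2 (asrc ε m) at x
          change ((Xφ K n ε c.1 c.2 m x, 0) : XV K n c.1 c.2 (atgt ε m) × XV K n d.1 d.2 (atgt ε m))
            = (Xφ K n ε c.1 c.2 m x + mkL n d.1 d.2 (asrc ε m) c.1 c.2 (atgt ε m) (η m) 0,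
              Xφ K n ε d.1 d.2 m 0)
          simp }
    let g : RepHom (extRep n ε d c η) (Xrep K n ε d.1 d.2) :=
      { app := fun m => LinearMap.snd K (XV K n c.1 c.2 m) (XV K n d.1 d.2 m)
        comm := by
          intro m
          rfl }
    have hs : IsSES f g := by
      refine ⟨fun m => ?_, fun m => ?_, fun m => ?_⟩
      · have q : Function.Injective (LinearMap.inl K (XV K n c.1 c.2 m) (XV K n d.1 d.2 m)) :=
          LinearMap.inl_injective
        exact q
      · have q : Function.Surjective (LinearMap.snd K (XV K n c.1 c.2 m) (XV K n d.1 d.2 m)) :=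
          LinearMap.snd_surjective
        exact q
      · exact LinearMap.range_inl K (XV K n c.1 c.2 m) (XV K n d.1 d.2 m)
    have hsp : Splits g := by
      by_contra h
      exact H ⟨_, f, g, hs, h⟩
    obtain ⟨s, hs⟩ := hsp
    let A : ∀ m, XV K n d.1 d.2 m →ₗ[K] XV K n c.1 c.2 m := fun m =>
      (LinearMap.fst K (XV K n c.1 c.2 m) (XV K n d.1 d.2 m)).comp (s.app m)
    refine ⟨fun m => sc (A m), ?_, ?_⟩
    · intro m hm
      constructor
      · by_contra h; exact hm (sc_src _ h)
      · by_contra h; exact hm (sc_tgt _ h)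
    · intro m ⟨h1, h2⟩
      have hA : ∀ x : XV K n d.1 d.2 (asrc ε m),
          A (atgt ε m) (Xφ K n ε d.1 d.2 m x) = Xφ K n ε c.1 c.2 m (A (asrc ε m) x)
            + mkL n d.1 d.2 (asrc ε m) c.1 c.2 (atgt ε m) (η m) x := by
        intro x
        have e := congrArg Prod.fst (LinearMap.congr_fun (s.comm m) x)
        have e2 : (LinearMap.snd K (XV K n c.1 c.2 (asrc ε m)) (XV K n d.1 d.2 (asrc ε m)))
          (s.app (asrc ε m) x) = x := LinearMap.congr_fun (hs (asrc ε m)) x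
        have e3 : A (atgt ε m) (Xφ K n ε d.1 d.2 m x) = Xφ K n ε c.1 c.2 m (A (asrc ε m) x)
            + mkL n d.1 d.2 (asrc ε m) c.1 c.2 (atgt ε m) (η m)
              ((LinearMap.snd K (XV K n c.1 c.2 (asrc ε m)) (XV K n d.1 d.2 (asrc ε m)))
                (s.app (asrc ε m) x)) := e
        rw [e2] at e3
        exact e3
      have e := congrArg (fun z : XV K n c.1 c.2 (atgt ε m) => (z : K)) (hA ⟨1, mem_XV h1 1⟩)
      simp only [Submodule.coe_add, sc_spec (A (atgt ε m)), Xφ_pos h2,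
        sc_spec (A (asrc ε m)), mkL_pos h2] at e
      show sc (A _) - sc (A _) = _
      by_cases h3 : SS n d.1 d.2 (atgt ε m)
      · rw [Xφ_pos h3] at e
        simp only [mul_one] at e
        rw [e]; ring
      · rw [XV_zero h3 (Xφ _ _ _ _ _ _ _)] at e
        rw [sc_src (A (atgt ε m)) h3]
        simp only [mul_one, Submodule.coe_zero, mul_zero] at e
        rw [e]; ring
  · rintro H ⟨E, f, g, ⟨hf, hg, hex⟩, hns⟩
    apply hns
    let F : ∀ m, XV K n c.1 c.2 m →ₗ[K] E.V m := fun m => f.app m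
    let G : ∀ m, E.V m →ₗ[K] XV K n d.1 d.2 m := fun m => g.app m
    have hF : ∀ m x, F (atgt ε m) (Xφ K n ε c.1 c.2 m x) = E.φ m (F (asrc ε m) x) :=
      fun m x => LinearMap.congr_fun (f.comm m) x
    have hG : ∀ m x, G (atgt ε m) (E.φ m x) = Xφ K n ε d.1 d.2 m (G (asrc ε m) x) :=
      fun m x => LinearMap.congr_fun (g.comm m) x
    have hGF : ∀ m x, G m (F m x) = 0 := by
      intro m x
      have : F m x ∈ LinearMap.range (f.app m) := ⟨x, rfl⟩
      rw [hex m] at this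
      exact this
    have hs : ∀ m, ∃ s : XV K n d.1 d.2 m →ₗ[K] E.V m, (G m).comp s = LinearMap.id := by
      intro m
      exact LinearMap.exists_rightInverse_of_surjective (G m)
        (LinearMap.range_eq_top.2 (hg m))
    choose s hs using hs
    have hs' : ∀ m x, G m (s m x) = x := fun m x => LinearMap.congr_fun (hs m) x
    have hη : ∀ m, ∃ y : XV K n c.1 c.2 (atgt ε m), ∀ h1 : SS n d.1 d.2 (asrc ε m),
        F (atgt ε m) y = E.φ m (s (asrc ε m) ⟨1, mem_XV h1 1⟩)
          - s (atgt ε m) (Xφ K n ε d.1 d.2 m ⟨1, mem_XV h1 1⟩) := by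
      intro m
      by_cases h1 : SS n d.1 d.2 (asrc ε m)
      · have : (E.φ m (s (asrc ε m) ⟨1, mem_XV h1 1⟩)
          - s (atgt ε m) (Xφ K n ε d.1 d.2 m ⟨1, mem_XV h1 1⟩)) ∈
            LinearMap.ker (g.app (atgt ε m)) := by
          change G (atgt ε m) _ = 0
          rw [map_sub, hG, hs', hs', sub_self]
        rw [← hex] at this
        obtain ⟨y, hy⟩ := this
        exact ⟨y, fun _ => hy⟩
      · exact ⟨0, fun h => absurd h h1⟩
    choose y hy using hη
    obtain ⟨t, ht, hte⟩ := H (fun m => (y m : K))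
    refine ⟨⟨fun m => s m + (F m).comp (mkL n d.1 d.2 m c.1 c.2 m (t m)), ?_⟩, ?_⟩
    · intro m
      refine LinearMap.ext fun x => ?_
      change XV K n d.1 d.2 (asrc ε m) at x
      change s (atgt ε m) (Xφ K n ε d.1 d.2 m x) + F (atgt ε m)
          (mkL n d.1 d.2 (atgt ε m) c.1 c.2 (atgt ε m) (t (atgt ε m)) (Xφ K n ε d.1 d.2 m x))
        = E.φ m (s (asrc ε m) x + F (asrc ε m)
          (mkL n d.1 d.2 (asrc ε m) c.1 c.2 (asrc ε m) (t (asrc ε m)) x))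
      by_cases h1 : SS n d.1 d.2 (asrc ε m)
      · have hx : x = (x : K) • (⟨1, mem_XV h1 1⟩ : XV K n d.1 d.2 (asrc ε m)) := by
          ext; simp
        have e1 : F (atgt ε m) ((x : K) • y m) = E.φ m (s (asrc ε m) x)
            - s (atgt ε m) (Xφ K n ε d.1 d.2 m x) := by
          rw [map_smul, hy m h1, smul_sub]
          conv_rhs => rw [hx]
          simp only [map_smul]
        rw [map_add, ← hF]
        have e2 : mkL n d.1 d.2 (atgt ε m) c.1 c.2 (atgt ε m) (t (atgt ε m))
              (Xφ K n ε d.1 d.2 m x) = (x : K) • y m + Xφ K n ε c.1 c.2 m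
              (mkL n d.1 d.2 (asrc ε m) c.1 c.2 (asrc ε m) (t (asrc ε m)) x) := by
          by_cases h2 : SS n c.1 c.2 (atgt ε m)
          · have e := hte m ⟨h1, h2⟩
            have e' : t (atgt ε m) = y m + t (asrc ε m) := by rw [← e]; ring
            ext
            simp only [Submodule.coe_add, Submodule.coe_smul, smul_eq_mul]
            rw [mkL_pos h2, Xφ_pos h2]
            have q1 : t (atgt ε m) * (Xφ K n ε d.1 d.2 m x : K) = t (atgt ε m) * x := by
              by_cases h3 : SS n d.1 d.2 (atgt ε m)
              · rw [Xφ_pos h3]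
              · have : t (atgt ε m) = 0 := by
                  by_contra h; exact h3 (ht _ h).1
                rw [this]; simp
            have q2 : (mkL n d.1 d.2 (asrc ε m) c.1 c.2 (asrc ε m) (t (asrc ε m)) x : K)
                = t (asrc ε m) * x := by
              by_cases h4 : SS n c.1 c.2 (asrc ε m)
              · rw [mkL_pos h4]
              · have : t (asrc ε m) = 0 := by
                  by_contra h; exact h4 (ht _ h).2
                rw [XV_zero h4 (mkL _ _ _ _ _ _ _ _ _), this]; simp
            rw [q1, q2, e']; ring
          · rw [XV_zero h2 (mkL _ _ _ _ _ _ _ _ _), XV_zero h2 (Xφ _ _ _ _ _ _ _),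
              XV_zero h2 (y m)]; simp
        rw [e2, map_add, e1]
        abel
      · rw [XV_zero h1 x]; simp
    · intro m
      refine LinearMap.ext fun x => ?_
      change XV K n d.1 d.2 m at x
      change G m (s m x + F m (mkL n d.1 d.2 m c.1 c.2 m (t m) x)) = x
      rw [map_add, hs', hGF, add_zero]

/-- combinatorial form of the exceptional pair condition -/
def Good (n : ℕ) (ε : ℕ → Bool) (d c : ℕ × ℕ) (l r : ℕ) : Prop :=
  r < l ∨ (l = r ∧ ¬ Arr n ε d c l) ∨
    (l < r ∧ ((Arr n ε d c l ∧ ¬ Arr n ε d c r) ∨ (¬ Arr n ε d c l ∧ Arr n ε d c r)))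

lemma arr_lt {n : ℕ} {ε : ℕ → Bool} {d c : ℕ × ℕ} (hd : d.1 < d.2 ∧ d.2 ≤ n)
    (hc : c.1 < c.2 ∧ c.2 ≤ n) {m : ℕ} (h : Arr n ε d c m) :
    max d.1 c.1 ≤ m ∧ m ≤ min d.2 c.2 := by
  unfold Arr SS asrc atgt at h
  cases hm : ε m <;> simp [hm] at h <;> omega

lemma arr_mid {n : ℕ} {ε : ℕ → Bool} {d c : ℕ × ℕ} (hd : d.1 < d.2 ∧ d.2 ≤ n)
    (hc : c.1 < c.2 ∧ c.2 ≤ n) {m : ℕ} (h1 : max d.1 c.1 < m) (h2 : m < min d.2 c.2) :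
    Arr n ε d c m := by
  unfold Arr SS asrc atgt
  cases hm : ε m <;> simp <;> omega

lemma supp_iff {n : ℕ} {d c : ℕ × ℕ} (hd : d.1 < d.2 ∧ d.2 ≤ n)
    (hc : c.1 < c.2 ∧ c.2 ≤ n) (t : ℕ → K) :
    Supp K n d c t ↔ ∀ m, ¬ (max d.1 c.1 < m ∧ m ≤ min d.2 c.2) → t m = 0 := by
  unfold Supp SS
  refine forall_congr' fun m => ?_
  rw [← not_imp_not, not_not]
  constructor
  · intro h h1; apply h; omega
  · intro h h1; apply h; omega

lemma eq_iff (ε : ℕ → Bool) (t : ℕ → K) (m : ℕ) (e : K) :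
    t (atgt ε m) - t (asrc ε m) = e ↔ t (m + 1) - t m = if ε m then e else - e := by
  unfold atgt asrc
  cases ε m <;> simp
  rw [← neg_sub, neg_eq_iff_eq_neg]

lemma excPair_iff_good {n : ℕ} {ε : ℕ → Bool} {d c : ℕ × ℕ} (hd : d.1 < d.2 ∧ d.2 ≤ n)
    (hc : c.1 < c.2 ∧ c.2 ≤ n) :
    ExcPair (Xrep K n ε c.1 c.2) (Xrep K n ε d.1 d.2) ↔
      Good n ε d c (max d.1 c.1) (min d.2 c.2) := by
  have hlt := @arr_lt n ε d c hd hc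
  have hmid := @arr_mid n ε d c hd hc
  have hsupp := supp_iff (K := K) hd hc
  unfold ExcPair
  rw [homZero_iff, extZero_iff]
  simp only [hsupp]
  generalize max d.1 c.1 = l at *
  generalize min d.2 c.2 = r at *
  have up : ∀ t : ℕ → K, (∀ m, l < m → m < r → t (m + 1) = t m) →
      ∀ m, l < m → m ≤ r → t m = t (l + 1) := by
    intro t ht m hm
    induction m, hm using Nat.le_induction with
    | base => intro _; rfl
    | succ m hm ih => intro h; rw [ht m hm (by omega), ih (by omega)]
  constructor
  · rintro ⟨H1, H2⟩
    unfold Good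
    rcases lt_trichotomy r l with h | h | h
    · exact Or.inl h
    · refine Or.inr (Or.inl ⟨h.symm, fun hA => ?_⟩)
      obtain ⟨t, ht, he⟩ := H2 (fun _ => 1)
      have := he l hA
      rw [ht _ (by omega), ht _ (by omega)] at this
      simp at this
    · refine Or.inr (Or.inr ⟨h, ?_⟩)
      by_cases hl : Arr n ε d c l <;> by_cases hr : Arr n ε d c r
      · exfalso
        obtain ⟨t, ht, he⟩ := H2 (fun m => if m = l then 1 else 0)
        simp only [eq_iff] at he
        have a1 := he l hl
        have a2 := he r hr
        have a3 : ∀ m, l < m → m < r → t (m + 1) = t m := by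
          intro m h1 h2
          have := he m (hmid h1 h2)
          rw [if_neg (show m ≠ l by omega)] at this
          simpa [sub_eq_zero] using this
        have a4 := up t a3 r h le_rfl
        rw [if_neg (show r ≠ l by omega), ht (r + 1) (by omega), a4] at a2
        rw [ht l (by omega)] at a1
        have a5 : t (l + 1) = 0 := by simpa using a2
        rw [a5] at a1
        cases hh : ε l <;> simp [hh] at a1
      · exact Or.inl ⟨hl, hr⟩
      · exact Or.inr ⟨hl, hr⟩
      · exfalso
        have := H1 (fun m => if l < m ∧ m ≤ r then 1 else 0)
          (fun m hm => if_neg hm) ?_ r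
        · simp [h] at this
        · intro m hm
          have hb := hlt hm
          have h1 : m ≠ l := by rintro rfl; exact hl hm
          have h2 : m ≠ r := by rintro rfl; exact hr hm
          have hs : l < asrc ε m ∧ asrc ε m ≤ r := by
            unfold asrc; split_ifs <;> omega
          have ht : l < atgt ε m ∧ atgt ε m ≤ r := by
            unfold atgt; split_ifs <;> omega
          simp only [if_pos hs, if_pos ht]
  · intro H
    constructor
    · intro t ht he
      by_contra hne
      push Not at hne
      obtain ⟨m, hm⟩ := hne
      have hmr : l < m ∧ m ≤ r := by
        by_contra h; exact hm (ht m h)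
      have he' : ∀ m, Arr n ε d c m → t (m + 1) = t m := by
        intro m h
        have := he m h
        rw [← sub_eq_zero, eq_iff] at this
        simpa [sub_eq_zero] using this
      have a := up t (fun m h1 h2 => he' m (hmid h1 h2))
      rcases H with H | H | ⟨_, H | H⟩
      · omega
      · omega
      · rw [a m hmr.1 hmr.2, he' l H.1, ht l (by omega)] at hm
        exact hm rfl
      · have b := he' r H.2
        rw [ht (r + 1) (by omega), a r (by omega) le_rfl, ← a m hmr.1 hmr.2] at b
        exact hm b.symm
    · intro η
      simp only [eq_iff]
      generalize hζ : (fun m => if ε m then η m else - η m) = ζ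
      have hζ' : ∀ m, (if ε m then η m else - η m) = ζ m := fun m => congrFun hζ m
      simp only [hζ']
      rcases H with H | H | ⟨H0, H | H⟩
      · refine ⟨fun _ => 0, fun _ _ => rfl, fun m hm => ?_⟩
        have := hlt hm; omega
      · refine ⟨fun _ => 0, fun _ _ => rfl, fun m hm => ?_⟩
        have := hlt hm
        have : m = l := by omega
        subst this
        exact absurd hm H.2
      · refine ⟨fun m => if l < m ∧ m ≤ r then ∑ i ∈ Finset.Ico l m, ζ i else 0,
          fun m hm => if_neg hm, fun m hm => ?_⟩
        have hb := hlt hm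
        have h2 : m ≠ r := by rintro rfl; exact H.2 hm
        beta_reduce
        rw [if_pos (show l < m + 1 ∧ m + 1 ≤ r by omega), Finset.sum_Ico_succ_top (by omega)]
        split_ifs with h3
        · ring
        · have : m = l := by omega
          subst this; simp
      · refine ⟨fun m => if l < m ∧ m ≤ r then - ∑ i ∈ Finset.Ico m (r + 1), ζ i else 0,
          fun m hm => if_neg hm, fun m hm => ?_⟩
        have hb := hlt hm
        have h2 : m ≠ l := by rintro rfl; exact H.1 hm
        beta_reduce
        rw [if_pos (show l < m ∧ m ≤ r by omega),
          Finset.sum_eq_sum_Ico_succ_bot (show m < r + 1 by omega)]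
        split_ifs with h3
        · ring
        · have : m = r := by omega
          subst this; simp

/-- the combinatorial pair condition -/
def PairOK (ε : ℕ → Bool) (c d : ℕ × ℕ) : Prop :=
  ¬ Crosses ε c d ∧ (SharesEndpoint c d → Cw ε c d)

lemma good_iff {n : ℕ} {ε : ℕ → Bool} {d c : ℕ × ℕ} (hd : d.1 < d.2 ∧ d.2 ≤ n)
    (hc : c.1 < c.2 ∧ c.2 ≤ n) (hne : c ≠ d) :
    Good n ε d c (max d.1 c.1) (min d.2 c.2) ↔ PairOK ε c d := by
  obtain ⟨c1, c2⟩ := c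
  obtain ⟨d1, d2⟩ := d
  have hne' : c1 = d1 → c2 ≠ d2 := by rintro rfl rfl; exact hne rfl
  simp only at hd hc
  have ha : ∀ m, Arr n ε (d1, d2) (c1, c2) m ↔
      (ε m = true ∧ d1 + 1 ≤ m ∧ m ≤ d2 ∧ c1 ≤ m ∧ m < c2) ∨
      (ε m = false ∧ d1 ≤ m ∧ m < d2 ∧ c1 + 1 ≤ m ∧ m ≤ c2) := by
    intro m
    unfold Arr SS asrc atgt
    cases hm : ε m <;> simp <;> omega
  unfold Good PairOK Crosses SharesEndpoint Cw
  simp only [ha]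
  clear ha hne
  rcases lt_trichotomy c1 d1 with h1 | h1 | h1 <;> rcases lt_trichotomy c2 d2 with h2 | h2 | h2
  all_goals grind

/-- potential -/
def pot (ε : ℕ → Bool) (d : ℕ × ℕ) (y : ℕ) : ℤ :=
  let a : ℤ := if ε d.1 then 0 else 1
  if y < d.1 then 0
  else if y = d.1 then - a
  else if y < d.2 then 1 - a - (if ε y then 0 else 1)
  else if y = d.2 then 1 - a
  else (if ε d.2 then 0 else 1) - a

lemma pot_self (ε : ℕ → Bool) (d : ℕ × ℕ) (hd : d.1 < d.2) :
    pot ε d d.2 = pot ε d d.1 + 1 := by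
  unfold pot
  grind

lemma pot_ok (ε : ℕ → Bool) (c d : ℕ × ℕ) (hd : d.1 < d.2) (hc : c.1 < c.2) (hne : c ≠ d)
    (h : PairOK ε c d) : pot ε d c.1 = pot ε d c.2 := by
  obtain ⟨c1, c2⟩ := c
  obtain ⟨d1, d2⟩ := d
  have hne' : c1 = d1 → c2 ≠ d2 := by rintro rfl rfl; exact hne rfl
  unfold PairOK Crosses SharesEndpoint Cw at h
  unfold pot
  simp only at hd hc h ⊢
  clear hne
  rcases lt_trichotomy c1 d1 with h1 | h1 | h1 <;> rcases lt_trichotomy c2 d2 with h2 | h2 | h2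
  all_goals grind

lemma acyclic_of_ok {k : ℕ} (ε : ℕ → Bool) (c : Fin k → ℕ × ℕ) (hc : ∀ a, (c a).1 < (c a).2)
    (hinj : Function.Injective c) (h : ∀ a b, a < b → PairOK ε (c a) (c b)) :
    (chordGraphF c).IsAcyclic := by
  let G : ℕ → SimpleGraph ℕ := fun t =>
    SimpleGraph.fromEdgeSet {e : Sym2 ℕ | ∃ a : Fin k, (a : ℕ) < t ∧ e = s((c a).1, (c a).2)}
  have key : ∀ t, t ≤ k → (G t).IsAcyclic := by
    intro t
    induction t with
    | zero =>
      intro _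
      have : G 0 = ⊥ := by
        simp [G]
      rw [this]; exact SimpleGraph.isAcyclic_bot
    | succ t ih =>
      intro ht
      let a : Fin k := ⟨t, by omega⟩
      have hG : G (t + 1) = G t ⊔ SimpleGraph.edge (c a).1 (c a).2 := by
        ext x y
        simp only [G, SimpleGraph.fromEdgeSet_adj, SimpleGraph.sup_adj, SimpleGraph.edge_adj,
          Set.mem_ofPred_eq]
        constructor
        · rintro ⟨⟨b, hb, e⟩, hxy⟩
          by_cases hbt : (b : ℕ) < t
          · exact Or.inl ⟨⟨b, hbt, e⟩, hxy⟩
          · have : b = a := Fin.ext (by simp [a]; omega)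
            subst this
            right
            refine ⟨?_, hxy⟩
            exact Sym2.eq_iff.1 e
        · rintro (⟨⟨b, hb, e⟩, hxy⟩ | ⟨e, hxy⟩)
          · exact ⟨⟨b, by omega, e⟩, hxy⟩
          · refine ⟨⟨a, by simp [a], ?_⟩, hxy⟩
            exact Sym2.eq_iff.2 e
      rw [hG]
      apply SimpleGraph.IsAcyclic.sup_edge_of_not_reachable _ (ih (by omega))
      rintro ⟨w⟩
      have hw : ∀ x y, (G t).Walk x y → pot ε (c a) x = pot ε (c a) y := by
        intro x y w
        induction w with
        | nil => rfl
        | cons hadj w ih =>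
          rw [← ih]
          simp only [G, SimpleGraph.fromEdgeSet_adj, Set.mem_ofPred_eq] at hadj
          obtain ⟨⟨b, hb, e⟩, -⟩ := hadj
          have hba : b < a := hb
          have := pot_ok ε (c b) (c a) (hc a) (hc b) (fun e => hba.ne (hinj e)) (h b a hba)
          rw [Sym2.eq_iff] at e
          rcases e with ⟨rfl, rfl⟩ | ⟨rfl, rfl⟩
          · exact this
          · exact this.symm
      have h1 := hw _ _ w
      have h2 := pot_self ε (c a) (hc a)
      omega
  have : chordGraphF c = G k := by
    unfold chordGraphF
    simp [G]
  rw [this]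
  exact key k le_rfl

lemma crosses_symm {ε : ℕ → Bool} {c d : ℕ × ℕ} (h : Crosses ε c d) : Crosses ε d c := by
  unfold Crosses at *
  tauto

lemma crosses_irrefl {ε : ℕ → Bool} {c : ℕ × ℕ} : ¬ Crosses ε c c := by
  unfold Crosses
  omega

lemma shares_symm {c d : ℕ × ℕ} (h : SharesEndpoint c d) : SharesEndpoint d c := by
  unfold SharesEndpoint at *
  omega

lemma cw_total {ε : ℕ → Bool} {c d : ℕ × ℕ} (hc : c.1 < c.2) (hd : d.1 < d.2) (hne : c ≠ d)
    (h : SharesEndpoint c d) : Cw ε c d ↔ ¬ Cw ε d c := by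
  obtain ⟨c1, c2⟩ := c
  obtain ⟨d1, d2⟩ := d
  have hne' : c1 = d1 → c2 ≠ d2 := by rintro rfl rfl; exact hne rfl
  unfold SharesEndpoint at h
  unfold Cw
  simp only at hd hc h ⊢
  clear hne
  grind

lemma cw_irrefl {ε : ℕ → Bool} {c : ℕ × ℕ} (hc : c.1 < c.2) : ¬ Cw ε c c := by
  unfold Cw
  omega

lemma diagramF_comp {k : ℕ} {ε : ℕ → Bool} {c : Fin k → ℕ × ℕ} (h : IsDiagramF ε c) :
    IsDiagramF ε (c ∘ Fin.rev) := by
  refine ⟨fun a b => h.1 _ _, ?_⟩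
  have : chordGraphF (c ∘ Fin.rev) = chordGraphF c := by
    unfold chordGraphF
    congr 1
    ext e
    simp only [Set.mem_ofPred_eq, Function.comp]
    constructor
    · rintro ⟨a, h⟩; exact ⟨_, h⟩
    · rintro ⟨a, h⟩; exact ⟨Fin.rev a, by simpa using h⟩
  rw [this]; exact h.2

lemma main_iff (K : Type) [Field K] {n k : ℕ} {ε : ℕ → Bool} (c : Fin k → ℕ × ℕ)
    (hc : ∀ a, (c a).1 < (c a).2 ∧ (c a).2 ≤ n) (hinj : Function.Injective c) :
    IsExcSeq K n ε c ↔ (IsDiagramF ε c ∧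
          ∀ a b : Fin k, a < b → SharesEndpoint (c a) (c b) → Cw ε (c a) (c b)) := by
  have h1 : IsExcSeq K n ε c ↔ ∀ a b, a < b → PairOK ε (c a) (c b) := by
    unfold IsExcSeq
    refine forall_congr' fun a => forall_congr' fun b => forall_congr' fun hab => ?_
    rw [excPair_iff_good (hc b) (hc a), good_iff (hc b) (hc a) (fun e => hab.ne (hinj e))]
  rw [h1]
  constructor
  · intro h
    refine ⟨⟨?_, acyclic_of_ok ε c (fun a => (hc a).1) hinj h⟩, fun a b hab => (h a b hab).2⟩
    intro a b
    rcases lt_trichotomy a b with hab | rfl | hab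
    · exact (h a b hab).1
    · exact crosses_irrefl
    · exact fun hx => (h b a hab).1 (crosses_symm hx)
  · rintro ⟨h1, h2⟩ a b hab
    exact ⟨h1.1 a b, h2 a b hab⟩

/-- Theorem 3.9 (ESbij): a sequence of pairwise distinct indecomposables is an exceptional
sequence iff its chords form a strand diagram in which earlier chords are clockwise from
later ones whenever they share an endpoint; equivalently, labeling the `ℓ`-th chord by
`k+1-ℓ` gives a good labeling, and reversal `c ↦ c ∘ Fin.rev` is a bijection between
exceptional sequences of length `k` and good-labeled strand diagrams with `k` strands
(where the chord with label `ℓ+1` is the value at `ℓ`). -/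
theorem exceptional_sequences_are_labeled_strand_diagrams (K : Type) [Field K]
    (n k : ℕ) (ε : ℕ → Bool) (hk : k ≤ n) :
    (∀ c : Fin k → ℕ × ℕ, (∀ a, (c a).1 < (c a).2 ∧ (c a).2 ≤ n) → Function.Injective c →
      (IsExcSeq K n ε c ↔
        (IsDiagramF ε c ∧
          ∀ a b : Fin k, a < b → SharesEndpoint (c a) (c b) → Cw ε (c a) (c b)))) ∧
    Set.BijOn (fun (c : Fin k → ℕ × ℕ) => c ∘ Fin.rev)
      {c : Fin k → ℕ × ℕ | (∀ a, (c a).1 < (c a).2 ∧ (c a).2 ≤ n) ∧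
        Function.Injective c ∧ IsExcSeq K n ε c}
      {g : Fin k → ℕ × ℕ | (∀ a, (g a).1 < (g a).2 ∧ (g a).2 ≤ n) ∧
        Function.Injective g ∧ IsDiagramF ε g ∧
        ∀ a b : Fin k, SharesEndpoint (g a) (g b) → Cw ε (g a) (g b) → b < a} := by
  refine ⟨fun c hc hinj => main_iff K c hc hinj, ?_, ?_, ?_⟩
  · rintro c ⟨hc, hinj, hex⟩
    obtain ⟨h1, h2⟩ := (main_iff K c hc hinj).1 hex
    refine ⟨fun a => hc _, hinj.comp Fin.rev_injective, diagramF_comp h1, ?_⟩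
    intro a b hs hcw
    simp only [Function.comp] at hs hcw
    by_contra hlt
    rcases (not_lt.1 hlt).lt_or_eq with hab | rfl
    · have hab' : Fin.rev b < Fin.rev a := Fin.rev_lt_rev.2 hab
      exact (cw_total (hc _).1 (hc _).1 (fun e => hab'.ne' (hinj e)) hs).1 hcw
        (h2 _ _ hab' (shares_symm hs))
    · exact cw_irrefl (hc _).1 hcw
  · intro c _ c' _ h
    funext a
    have := congrFun h (Fin.rev a)
    simpa using this
  · rintro g ⟨hg, hinj, hd, hl⟩
    have hinj' : Function.Injective (g ∘ Fin.rev) := hinj.comp Fin.rev_injective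
    refine ⟨g ∘ Fin.rev, ⟨fun a => hg _, hinj', ?_⟩, ?_⟩
    · refine (main_iff K (g ∘ Fin.rev) (fun a => hg _) hinj').2 ⟨diagramF_comp hd, ?_⟩
      intro a b hab hs
      have hab' : Fin.rev b < Fin.rev a := Fin.rev_lt_rev.2 hab
      simp only [Function.comp] at hs ⊢
      refine (cw_total (hg _).1 (hg _).1 (fun e => hab'.ne' (hinj e)) hs).2 fun hcw => ?_
      exact lt_asymm hab' (hl _ _ (shares_symm hs) hcw)
    · funext a
      simp

end ESPaper
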